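/- Let B = 7ζ(3)/(2π²). Then for every integer n ≥ 1, exp(Bn - (1 - 1/n)·ln n - (1 - ln(π/2))) ≤ ∏_{1 ≤ k ≤ n/2} (cot(πk/(2n)))^{1 - 2k/n} ≤ exp(Bn), where the product runs over all integers k with 1 ≤ k ≤ n/2. -/

import Mathlib

/-!
Taking logarithms turns the product into `∑ f (k / n)` with `f x = (1 - 2x) ln cot (π x / 2)`, which
is nonnegative and decreasing on `(0, 1/2]`. Hence the sum lies between `n ∫_{1/n}^{1/2} f` and
`n ∫_0^{1/2} f`.

* Integration by parts gives `∫_0^{1/2} f = ∫_0^{1/2} π (x - x²) / sin (π x) dx`. Replacing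
  `1 / sin` by `2 ∑_{k < N} sin ((2k+1) π x)`, at the cost of an error `cos (2N π x) / sin (π x)`
  that vanishes in the limit by the Riemann–Lebesgue lemma, evaluates this as
  `(4 / π²) ∑ 1 / (2k+1)³ = 7 ζ(3) / (2π²) = B` (`integral_cscWeight`).
* For the lower bound, `cot y ≤ 1 / y` bounds `n ∫_0^{1/n} f` by an elementary integral, namely
  `(1 - 1/n) (ln n - ln (π/2)) + 1 - 1/(2n)`, and `ln (π/2) ≤ 1/2` absorbs the terms of order `1/n`
  (`mul_logPrimitive_inv_le`). For `n = 1` the sum is empty and the same comparison on `[0, 1/2]`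
  gives `B ≤ 1 - ln (π/2)`.

The integral of `f` is handled through its primitive `logCotPrimitive`, continuous up to `0`, and
sums are compared with it by the mean value theorem on each mesh interval.
-/

open scoped Real

/-! ### The constant as an integral -/

/-- The function `x ↦ (x - x²) · π / sin (π x)`, with its removable singularity at `0` filled in
by writing it through `sinc`. -/
noncomputable def cscWeight (x : ℝ) : ℝ := (1 - x) / Real.sinc (π * x)

lemma sinc_mul_self (y : ℝ) : Real.sinc y * y = Real.sin y := by
  rcases eq_or_ne y 0 with rfl | h
  · simp
  · rw [Real.sinc_of_ne_zero h]; field_simp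

lemma sinc_pi_mul_ne_zero {x : ℝ} (hx : x ∈ Set.Ioo (-1 : ℝ) 1) : Real.sinc (π * x) ≠ 0 := by
  rcases eq_or_ne x 0 with rfl | h
  · simp
  · have hp := Real.pi_pos
    rw [Real.sinc_of_ne_zero (by positivity)]
    refine div_ne_zero ?_ (by positivity)
    rw [Ne, Real.sin_eq_zero_iff_of_lt_of_lt (by nlinarith [hx.1]) (by nlinarith [hx.2])]
    positivity

lemma cscWeight_mul_sin {x : ℝ} (hx : x ∈ Set.Ioo (-1 : ℝ) 1) :
    cscWeight x * Real.sin (π * x) = π * (x - x ^ 2) := by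
  have h := sinc_pi_mul_ne_zero hx
  rw [← sinc_mul_self, cscWeight, div_mul_eq_mul_div, div_eq_iff h]
  ring

lemma continuousOn_cscWeight : ContinuousOn cscWeight (Set.Ioo (-1 : ℝ) 1) := by
  unfold cscWeight
  refine ContinuousOn.div (by fun_prop) ?_ (fun x hx => sinc_pi_mul_ne_zero hx)
  exact (Real.continuous_sinc.comp (by fun_prop : Continuous fun x : ℝ => π * x)).continuousOn

lemma intervalIntegrable_cscWeight {a b : ℝ} (ha : a ∈ Set.Ioo (-1 : ℝ) 1)
    (hb : b ∈ Set.Ioo (-1 : ℝ) 1) : IntervalIntegrable cscWeight MeasureTheory.volume a b :=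
  (continuousOn_cscWeight.mono (Set.OrdConnected.uIcc_subset inferInstance ha hb)).intervalIntegrable

/-- A Dirichlet-kernel identity: the partial sums of odd sine frequencies telescope. -/
lemma sin_mul_sum_odd_sin (y : ℝ) (N : ℕ) :
    Real.sin y * ∑ k ∈ Finset.range N, 2 * Real.sin ((2 * k + 1) * y)
      = 1 - Real.cos (2 * N * y) := by
  induction N with
  | zero => simp
  | succ N ih =>
    rw [Finset.sum_range_succ, mul_add, ih]
    have h := Real.two_mul_sin_mul_sin ((2 * N + 1) * y) y
    have h1 : (2 * (N : ℝ) + 1) * y - y = 2 * N * y := by ring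
    have h2 : (2 * (N : ℝ) + 1) * y + y = 2 * ((N + 1 : ℕ) : ℝ) * y := by push_cast; ring
    rw [h1, h2] at h
    linarith

/-- Only the boundary term at `0` survives, because `cos ((2k+1) π / 2) = 0`. -/
lemma integral_weight_mul_sin (k : ℕ) :
    ∫ x in (0 : ℝ)..(1 / 2), π * (x - x ^ 2) * (2 * Real.sin ((2 * k + 1) * (π * x)))
      = 4 / π ^ 2 * (1 / (2 * (k : ℝ) + 1) ^ 3) := by
  have hp := Real.pi_pos
  set c : ℝ := (2 * k + 1) * π with hc
  have hc0 : c ≠ 0 := by positivity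
  have hcos : Real.cos (c * (1 / 2)) = 0 := by
    rw [Real.cos_eq_zero_iff]
    exact ⟨k, by rw [hc]; push_cast; ring⟩
  have key : ∀ x : ℝ, HasDerivAt (fun x => 2 * π * (-(x - x ^ 2) * Real.cos (c * x) / c
      + (1 - 2 * x) * Real.sin (c * x) / c ^ 2 - 2 * Real.cos (c * x) / c ^ 3))
      (π * (x - x ^ 2) * (2 * Real.sin (c * x))) x := by
    intro x
    have hl : HasDerivAt (fun x : ℝ => c * x) c x := by
      simpa using (hasDerivAt_id x).const_mul c
    have h1 : HasDerivAt (fun x : ℝ => -(x - x ^ 2)) (-(1 - 2 * x)) x := by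
      have := ((hasDerivAt_id' x).fun_sub (hasDerivAt_pow 2 x)).fun_neg
      simpa using this
    have h2 : HasDerivAt (fun x : ℝ => 1 - 2 * x) (-2) x := by
      simpa using ((hasDerivAt_id x).const_mul 2).const_sub 1
    have h := ((((h1.mul hl.cos).div_const c).add ((h2.mul hl.sin).div_const (c ^ 2))).sub
      ((hl.cos.const_mul 2).div_const (c ^ 3))).const_mul (2 * π)
    refine h.congr_deriv ?_
    field_simp
    ring
  have harg : ∀ x : ℝ, (2 * (k : ℝ) + 1) * (π * x) = c * x := fun x => by rw [hc]; ring
  simp_rw [harg]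
  rw [intervalIntegral.integral_eq_sub_of_hasDerivAt (fun x _ => key x)
    (Continuous.intervalIntegrable (by fun_prop) _ _), hcos]
  simp only [mul_zero, Real.cos_zero, Real.sin_zero]
  rw [hc]
  field_simp
  ring

open Filter Topology in
/-- The Riemann–Lebesgue lemma for `cscWeight` on `[0, 1/2]`. -/
lemma tendsto_integral_cscWeight_mul_cos :
    Tendsto (fun N : ℕ => ∫ x in (0 : ℝ)..(1 / 2), cscWeight x * Real.cos (2 * N * (π * x)))
      atTop (𝓝 0) := by
  have h := Real.tendsto_integral_exp_smul_cocompact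
    (Set.indicator (Set.Ioc (0 : ℝ) (1 / 2)) (fun x => (cscWeight x : ℂ)))
  have hN : Tendsto (fun N : ℕ => (N : ℝ)) atTop (cocompact ℝ) :=
    tendsto_natCast_atTop_atTop.mono_right atTop_le_cocompact
  have h2 := (Complex.continuous_re.tendsto 0).comp (h.comp hN)
  rw [Complex.zero_re] at h2
  refine h2.congr fun N => ?_
  simp only [Function.comp]
  have e : ∀ v : ℝ, Real.fourierChar (-(v * N)) •
      (Set.indicator (Set.Ioc (0 : ℝ) (1 / 2)) (fun x => (cscWeight x : ℂ))) v
      = Set.indicator (Set.Ioc (0 : ℝ) (1 / 2))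
        (fun v => (Real.fourierChar (-(v * N)) : ℂ) * (cscWeight v : ℂ)) v := by
    intro v
    by_cases hv : v ∈ Set.Ioc (0 : ℝ) (1 / 2)
    · rw [Set.indicator_of_mem hv, Set.indicator_of_mem hv, Circle.smul_def, smul_eq_mul]
    · rw [Set.indicator_of_notMem hv, Set.indicator_of_notMem hv, smul_zero]
  simp_rw [e]
  rw [MeasureTheory.integral_indicator measurableSet_Ioc,
    intervalIntegral.integral_of_le (by norm_num)]
  have hi : MeasureTheory.Integrable
      (fun v : ℝ => (Real.fourierChar (-(v * N)) : ℂ) * (cscWeight v : ℂ))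
      (MeasureTheory.volume.restrict (Set.Ioc (0 : ℝ) (1 / 2))) := by
    have : ContinuousOn (fun v : ℝ => (Real.fourierChar (-(v * N)) : ℂ) * (cscWeight v : ℂ))
        (Set.Icc (0 : ℝ) (1 / 2)) := by
      refine ContinuousOn.mul ?_ ?_
      · simp_rw [Real.fourierChar_apply]
        fun_prop
      · exact Complex.continuous_ofReal.comp_continuousOn
          (continuousOn_cscWeight.mono fun x hx => ⟨by linarith [hx.1], by linarith [hx.2]⟩)
    exact (this.integrableOn_compact isCompact_Icc).mono_set Set.Ioc_subset_Icc_self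
  have := integral_re hi
  simp only [RCLike.re_to_complex] at this
  rw [← this]
  refine MeasureTheory.integral_congr_ae (Eventually.of_forall fun v => ?_)
  simp only [Real.fourierChar_apply, Complex.re_mul_ofReal, Complex.exp_ofReal_mul_I_re]
  rw [show 2 * π * -(v * (N : ℝ)) = -(2 * N * (π * v)) by ring, Real.cos_neg, mul_comm]

lemma hasSum_odd_cubes :
    HasSum (fun k : ℕ => 1 / (2 * (k : ℝ) + 1) ^ 3) (7 / 8 * (riemannZeta 3).re) := by
  have hz : (riemannZeta 3).re = ∑' n : ℕ, 1 / (n : ℝ) ^ 3 := by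
    have h := zeta_nat_eq_tsum_of_gt_one (k := 3) (by norm_num)
    have e : (∑' n : ℕ, 1 / (n : ℂ) ^ 3) = ((∑' n : ℕ, 1 / (n : ℝ) ^ 3 : ℝ) : ℂ) := by
      push_cast; rfl
    rw [e] at h
    have h' := congrArg Complex.re h
    simpa using h'
  have hs : Summable (fun n : ℕ => 1 / (n : ℝ) ^ 3) :=
    Real.summable_one_div_nat_pow.mpr (by norm_num)
  have h1 : Summable (fun k : ℕ => 1 / ((2 * k : ℕ) : ℝ) ^ 3) :=
    hs.comp_injective (i := fun k : ℕ => 2 * k) fun a b h => by simpa using h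
  have h2 : Summable (fun k : ℕ => 1 / ((2 * k + 1 : ℕ) : ℝ) ^ 3) :=
    hs.comp_injective (i := fun k : ℕ => 2 * k + 1) fun a b h => by simpa using h
  have h3 := tsum_even_add_odd (f := fun n : ℕ => 1 / (n : ℝ) ^ 3) h1 h2
  have h4 : ∑' k : ℕ, 1 / ((2 * k : ℕ) : ℝ) ^ 3 = 1 / 8 * ∑' k : ℕ, 1 / (k : ℝ) ^ 3 := by
    rw [← tsum_mul_left]
    refine tsum_congr fun k => ?_
    push_cast
    rw [mul_pow, one_div, one_div, mul_inv]
    norm_num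
  have h5 := h2.hasSum
  rw [h4] at h3
  push_cast at h3 h5
  rw [hz]
  convert h5 using 1
  linarith

open Filter Topology in
/-- `7ζ(3)/(2π²)` as an integral: the odd-frequency sine sums approximate `1 / sin` weakly, and
integrating them against `π (x - x²)` produces the sum of the reciprocals of the odd cubes. -/
lemma integral_cscWeight :
    ∫ x in (0 : ℝ)..(1 / 2), cscWeight x = 7 * (riemannZeta 3).re / (2 * π ^ 2) := by
  have hp := Real.pi_pos
  have hI := intervalIntegrable_cscWeight (a := 0) (b := 1 / 2) (by norm_num) (by norm_num)
  have key : ∀ N : ℕ, ∑ k ∈ Finset.range N, 4 / π ^ 2 * (1 / (2 * (k : ℝ) + 1) ^ 3)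
      = (∫ x in (0 : ℝ)..(1 / 2), cscWeight x)
        - ∫ x in (0 : ℝ)..(1 / 2), cscWeight x * Real.cos (2 * N * (π * x)) := by
    intro N
    simp_rw [← integral_weight_mul_sin]
    rw [← intervalIntegral.integral_finsetSum
      (fun k _ => Continuous.intervalIntegrable (by fun_prop) _ _),
      ← intervalIntegral.integral_sub hI (hI.mul_continuousOn (by fun_prop))]
    refine intervalIntegral.integral_congr fun x hx => ?_
    rw [Set.uIcc_of_le (by norm_num)] at hx
    have h1 := cscWeight_mul_sin (x := x) ⟨by linarith [hx.1], by linarith [hx.2]⟩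
    have h2 := sin_mul_sum_odd_sin (π * x) N
    rw [← Finset.mul_sum, ← h1, mul_assoc, h2]
    ring
  have l1 := (hasSum_odd_cubes.mul_left (4 / π ^ 2)).tendsto_sum_nat
  have l2 := tendsto_integral_cscWeight_mul_cos.const_sub
    (∫ x in (0 : ℝ)..(1 / 2), cscWeight x)
  simp_rw [key] at l1
  have := tendsto_nhds_unique l2 l1
  rw [sub_zero] at this
  rw [this]
  field_simp
  ring

/-! ### The weighted log-cotangent and its primitive -/

/-- `ln cot (π x / 2)`, written as a difference of logarithms. -/
noncomputable def logCot (x : ℝ) : ℝ :=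
  Real.log (Real.cos (π * x / 2)) - Real.log (Real.sin (π * x / 2))

/-- The primitive `x ↦ ∫₀ˣ (1 - 2t) ln cot (π t / 2) dt`, in the form given by integration by
parts, so that only the continuous function `cscWeight` is integrated. -/
noncomputable def logCotPrimitive (x : ℝ) : ℝ :=
  (∫ t in (0 : ℝ)..x, cscWeight t) + (x - x ^ 2) * logCot x

/-- The primitive, vanishing at `0`, of `x ↦ -(1 - 2x) ln (π x / 2)`, which dominates
`logCotPrimitive` because `cot y ≤ 1 / y`. -/
noncomputable def logPrimitive (x : ℝ) : ℝ :=
  -((x - x ^ 2) * Real.log (π * x / 2)) + x - x ^ 2 / 2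

lemma half_angle_pos {x : ℝ} (h0 : 0 < x) (h1 : x < 1) :
    0 < Real.cos (π * x / 2) ∧ 0 < Real.sin (π * x / 2) := by
  have hp := Real.pi_pos
  exact ⟨Real.cos_pos_of_mem_Ioo ⟨by nlinarith, by nlinarith⟩,
    Real.sin_pos_of_pos_of_lt_pi (by positivity) (by nlinarith)⟩

lemma hasDerivAt_logCot {x : ℝ} (h0 : 0 < x) (h1 : x < 1) :
    HasDerivAt logCot (-(π / Real.sin (π * x))) x := by
  obtain ⟨hc, hs⟩ := half_angle_pos h0 h1
  have hl : HasDerivAt (fun x : ℝ => π * x / 2) (π / 2) x := by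
    simpa using ((hasDerivAt_id' x).const_mul π).div_const 2
  refine ((hl.cos.log hc.ne').sub (hl.sin.log hs.ne')).congr_deriv ?_
  rw [show π * x = 2 * (π * x / 2) by ring, Real.sin_two_mul,
    show 2 * (π * x / 2) / 2 = π * x / 2 by ring]
  field_simp
  linear_combination (-1) * Real.sin_sq_add_cos_sq (π * x / 2)

lemma logCot_half : logCot (1 / 2) = 0 := by
  rw [logCot, show π * (1 / 2) / 2 = π / 4 by ring, Real.cos_pi_div_four, Real.sin_pi_div_four,
    sub_self]

lemma antitoneOn_logCot : AntitoneOn logCot (Set.Ioc 0 (1 / 2)) := by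
  intro a ha b hb hab
  have hp := Real.pi_pos
  obtain ⟨-, hsa⟩ := half_angle_pos ha.1 (by linarith [ha.2])
  obtain ⟨hcb, -⟩ := half_angle_pos hb.1 (by linarith [hb.2])
  refine sub_le_sub (Real.log_le_log hcb ?_) (Real.log_le_log hsa ?_)
  · exact Real.cos_le_cos_of_nonneg_of_le_pi (by nlinarith [ha.1]) (by nlinarith [hb.2])
      (by nlinarith)
  · exact Real.sin_le_sin_of_le_of_le_pi_div_two (by nlinarith [ha.1]) (by nlinarith [hb.2])
      (by nlinarith)

lemma logCot_nonneg {x : ℝ} (h0 : 0 < x) (h1 : x ≤ 1 / 2) : 0 ≤ logCot x := by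
  rw [← logCot_half]
  exact antitoneOn_logCot ⟨h0, h1⟩ ⟨by norm_num, le_rfl⟩ h1

lemma logCot_le {x : ℝ} (h0 : 0 < x) (h1 : x < 1) : logCot x ≤ -Real.log (π * x / 2) := by
  have hp := Real.pi_pos
  obtain ⟨hc, hs⟩ := half_angle_pos h0 h1
  have h := Real.lt_tan (x := π * x / 2) (by positivity) (by nlinarith)
  rw [Real.tan_eq_sin_div_cos, lt_div_iff₀ hc] at h
  have h2 := Real.log_le_log (by positivity) h.le
  rw [Real.log_mul (by positivity) hc.ne'] at h2
  rw [logCot]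
  linarith

lemma antitoneOn_weighted_logCot :
    AntitoneOn (fun x => (1 - 2 * x) * logCot x) (Set.Ioc 0 (1 / 2)) := by
  intro a ha b hb hab
  exact mul_le_mul (by linarith) (antitoneOn_logCot ha hb hab) (logCot_nonneg hb.1 hb.2)
    (by linarith [ha.2])

lemma weighted_logCot_nonneg {x : ℝ} (h0 : 0 < x) (h1 : x ≤ 1 / 2) :
    0 ≤ (1 - 2 * x) * logCot x :=
  mul_nonneg (by linarith) (logCot_nonneg h0 h1)

lemma hasDerivAt_logCotPrimitive {x : ℝ} (h0 : 0 < x) (h1 : x < 1) :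
    HasDerivAt logCotPrimitive ((1 - 2 * x) * logCot x) x := by
  have hx : x ∈ Set.Ioo (-1 : ℝ) 1 := ⟨by linarith, h1⟩
  have hI := intervalIntegral.integral_hasDerivAt_right
    (intervalIntegrable_cscWeight (a := 0) (b := x) (by norm_num) hx)
    (continuousOn_cscWeight.stronglyMeasurableAtFilter isOpen_Ioo x hx)
    (continuousOn_cscWeight.continuousAt (isOpen_Ioo.mem_nhds hx))
  have h2 : HasDerivAt (fun x : ℝ => x - x ^ 2) (1 - 2 * x) x := by
    simpa using (hasDerivAt_id' x).fun_sub (hasDerivAt_pow 2 x)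
  refine (hI.add (h2.mul (hasDerivAt_logCot h0 h1))).congr_deriv ?_
  have hs : 0 < Real.sin (π * x) :=
    Real.sin_pos_of_pos_of_lt_pi (by have := Real.pi_pos; positivity) (by nlinarith [Real.pi_pos])
  have hw := cscWeight_mul_sin hx
  rw [← eq_div_iff hs.ne'] at hw
  rw [hw]
  ring

lemma continuous_mul_log_pi : Continuous (fun x : ℝ => x * Real.log (π * x / 2)) := by
  have h := (Real.continuous_mul_log.comp (by fun_prop : Continuous fun x : ℝ => π * x / 2)).const_mul
    (2 / π)
  refine h.congr fun x => ?_
  have hp := Real.pi_pos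
  simp only [Function.comp]
  field_simp

lemma continuous_logPrimitive : Continuous logPrimitive := by
  have h : Continuous fun x : ℝ =>
      -((1 - x) * (x * Real.log (π * x / 2))) + x - x ^ 2 / 2 :=
    ((((by fun_prop : Continuous fun x : ℝ => 1 - x).mul continuous_mul_log_pi).neg).add
      continuous_id).sub (by fun_prop)
  refine h.congr fun x => ?_
  rw [logPrimitive]
  ring

lemma hasDerivAt_logPrimitive {x : ℝ} (h0 : 0 < x) :
    HasDerivAt logPrimitive (-((1 - 2 * x) * Real.log (π * x / 2))) x := by
  have hp := Real.pi_pos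
  have hl : HasDerivAt (fun x : ℝ => π * x / 2) (π / 2) x := by
    simpa using ((hasDerivAt_id' x).const_mul π).div_const 2
  have h2 : HasDerivAt (fun x : ℝ => x - x ^ 2) (1 - 2 * x) x := by
    simpa using (hasDerivAt_id' x).fun_sub (hasDerivAt_pow 2 x)
  have h := (((h2.mul (hl.log (by positivity))).fun_neg).fun_add (hasDerivAt_id' x)).fun_sub
    ((hasDerivAt_pow 2 x).div_const 2)
  refine h.congr_deriv ?_
  push_cast
  field_simp
  ring

/-- At `0` the boundary term `(x - x²) ln cot (π x / 2)` is squeezed by `-x ln (π x / 2) → 0`. -/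
lemma continuousOn_logCotPrimitive : ContinuousOn logCotPrimitive (Set.Icc 0 (1 / 2)) := by
  intro x hx
  rcases hx.1.eq_or_lt with rfl | h0
  · have hI : ContinuousOn (fun x => ∫ t in (0 : ℝ)..x, cscWeight t) (Set.Icc 0 (1 / 2)) := by
      have := intervalIntegral.continuousOn_primitive_interval' (a := 0)
        (intervalIntegrable_cscWeight (a := 0) (b := 1 / 2) (by norm_num) (by norm_num))
        Set.left_mem_uIcc
      rwa [Set.uIcc_of_le (by norm_num)] at this
    refine (hI 0 hx).add ?_
    have hz : ((0 : ℝ) - 0 ^ 2) * logCot 0 = 0 := by simp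
    rw [ContinuousWithinAt, hz]
    have hu : Filter.Tendsto (fun x : ℝ => -(x * Real.log (π * x / 2)))
        (nhdsWithin 0 (Set.Icc 0 (1 / 2))) (nhds 0) := by
      have := continuous_mul_log_pi.fun_neg.continuousWithinAt (s := Set.Icc 0 (1 / 2)) (x := 0)
      rw [ContinuousWithinAt] at this
      simpa using this
    refine tendsto_of_tendsto_of_tendsto_of_le_of_le' tendsto_const_nhds hu ?_ ?_
    · filter_upwards [self_mem_nhdsWithin] with y hy
      rcases hy.1.eq_or_lt with rfl | hy0
      · simp
      · exact mul_nonneg (by nlinarith [hy.2]) (logCot_nonneg hy0 hy.2)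
    · filter_upwards [self_mem_nhdsWithin] with y hy
      rcases hy.1.eq_or_lt with rfl | hy0
      · simp
      · have h1 := logCot_le hy0 (by linarith [hy.2])
        have h2 := logCot_nonneg hy0 hy.2
        calc (y - y ^ 2) * logCot y ≤ y * logCot y :=
              mul_le_mul_of_nonneg_right (by nlinarith) h2
          _ ≤ y * -Real.log (π * y / 2) := mul_le_mul_of_nonneg_left h1 hy0.le
          _ = _ := by ring
  · exact (hasDerivAt_logCotPrimitive h0 (by linarith [hx.2])).continuousAt.continuousWithinAt

lemma logCotPrimitive_zero : logCotPrimitive 0 = 0 := by simp [logCotPrimitive]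

lemma logCotPrimitive_half :
    logCotPrimitive (1 / 2) = 7 * (riemannZeta 3).re / (2 * π ^ 2) := by
  rw [logCotPrimitive, logCot_half, mul_zero, add_zero, integral_cscWeight]

lemma logCotPrimitive_le {x : ℝ} (h0 : 0 ≤ x) (h1 : x ≤ 1 / 2) :
    logCotPrimitive x ≤ logPrimitive x := by
  have hd : ∀ y ∈ interior (Set.Icc (0 : ℝ) (1 / 2)),
      HasDerivAt (fun y => logPrimitive y - logCotPrimitive y)
        (-((1 - 2 * y) * Real.log (π * y / 2)) - (1 - 2 * y) * logCot y) y := by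
    intro y hy
    rw [interior_Icc] at hy
    exact (hasDerivAt_logPrimitive hy.1).sub
      (hasDerivAt_logCotPrimitive hy.1 (by linarith [hy.2]))
  have hm : MonotoneOn (fun y => logPrimitive y - logCotPrimitive y) (Set.Icc 0 (1 / 2)) := by
    refine monotoneOn_of_deriv_nonneg (convex_Icc _ _)
      (continuous_logPrimitive.continuousOn.sub continuousOn_logCotPrimitive)
      (fun y hy => (hd y hy).differentiableAt.differentiableWithinAt) fun y hy => ?_
    rw [(hd y hy).deriv]
    rw [interior_Icc] at hy
    have := logCot_le hy.1 (by linarith [hy.2])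
    nlinarith [hy.2]
  have h := hm ⟨le_rfl, by norm_num⟩ ⟨h0, h1⟩ h0
  have hz : logPrimitive 0 = 0 := by simp [logPrimitive]
  simp only [hz, logCotPrimitive_zero] at h
  linarith

lemma logCotPrimitive_slope {a b : ℝ} (ha : 0 ≤ a) (hab : a < b) (hb : b ≤ 1 / 2) :
    ∃ c ∈ Set.Ioo a b,
      logCotPrimitive b - logCotPrimitive a = (1 - 2 * c) * logCot c * (b - a) := by
  obtain ⟨c, hc, h⟩ := exists_hasDerivAt_eq_slope logCotPrimitive
    (fun x => (1 - 2 * x) * logCot x) hab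
    (continuousOn_logCotPrimitive.mono (Set.Icc_subset_Icc ha hb))
    (fun x hx => hasDerivAt_logCotPrimitive (by linarith [hx.1]) (by linarith [hx.2]))
  exact ⟨c, hc, by rw [h, div_mul_cancel₀ _ (by linarith)]⟩

lemma le_logCotPrimitive_sub {a b : ℝ} (ha : 0 ≤ a) (hab : a ≤ b) (hb : b ≤ 1 / 2) :
    (1 - 2 * b) * logCot b * (b - a) ≤ logCotPrimitive b - logCotPrimitive a := by
  rcases hab.eq_or_lt with rfl | hab
  · simp
  obtain ⟨c, hc, h⟩ := logCotPrimitive_slope ha hab hb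
  rw [h]
  exact mul_le_mul_of_nonneg_right (antitoneOn_weighted_logCot
    ⟨by linarith [hc.1], by linarith [hc.2]⟩ ⟨by linarith, hb⟩ hc.2.le) (by linarith)

lemma logCotPrimitive_sub_le {a b : ℝ} (ha : 0 < a) (hab : a ≤ b) (hb : b ≤ 1 / 2) :
    logCotPrimitive b - logCotPrimitive a ≤ (1 - 2 * a) * logCot a * (b - a) := by
  rcases hab.eq_or_lt with rfl | hab
  · simp
  obtain ⟨c, hc, h⟩ := logCotPrimitive_slope ha.le hab hb
  rw [h]
  exact mul_le_mul_of_nonneg_right (antitoneOn_weighted_logCot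
    ⟨ha, by linarith⟩ ⟨by linarith [hc.1], by linarith [hc.2]⟩ hc.1.le) (by linarith)

/-! ### Comparing the sum with the primitive -/

lemma sum_le_logCotPrimitive {n : ℕ} (hn : 1 ≤ n) (j : ℕ) (hj : (j : ℝ) / n ≤ 1 / 2) :
    ∑ k ∈ Finset.Icc 1 j, (1 - 2 * ((k : ℝ) / n)) * logCot (k / n) ≤
      n * logCotPrimitive (j / n) := by
  have hn0 : (0 : ℝ) < n := by exact_mod_cast hn
  induction j with
  | zero => simp [logCotPrimitive_zero]
  | succ j ih =>
    have hlt : (j : ℝ) / n ≤ ((j + 1 : ℕ) : ℝ) / n := by gcongr; simp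
    rw [Finset.sum_Icc_succ_top (by lia)]
    have h1 := ih (hlt.trans hj)
    have h2 := le_logCotPrimitive_sub (by positivity) hlt hj
    rw [show ((j + 1 : ℕ) : ℝ) / n - j / n = 1 / n by push_cast; ring, mul_one_div,
      div_le_iff₀ hn0] at h2
    linarith

/-- The right endpoint `c` ranges over the whole mesh interval `[j/n, (j+1)/n]`, so that `c = 1/2`
is allowed whether `n` is even or odd. -/
lemma logCotPrimitive_le_sum {n : ℕ} (hn : 1 ≤ n) (j : ℕ) (hj : 1 ≤ j) (c : ℝ)
    (hjc : (j : ℝ) / n ≤ c) (hcj : c ≤ ((j + 1 : ℕ) : ℝ) / n) (hc : c ≤ 1 / 2) :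
    n * (logCotPrimitive c - logCotPrimitive (1 / n)) ≤
      ∑ k ∈ Finset.Icc 1 j, (1 - 2 * ((k : ℝ) / n)) * logCot (k / n) := by
  have hn0 : (0 : ℝ) < n := by exact_mod_cast hn
  -- the contribution of one mesh interval
  have step : ∀ i : ℕ, 1 ≤ i → ∀ c : ℝ, (i : ℝ) / n ≤ c → c ≤ ((i + 1 : ℕ) : ℝ) / n → c ≤ 1 / 2 →
      n * (logCotPrimitive c - logCotPrimitive (i / n)) ≤
        (1 - 2 * ((i : ℝ) / n)) * logCot (i / n) := by
    intro i hi c h1 h2 h3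
    have hi0 : (0 : ℝ) < i := by exact_mod_cast hi
    have hpos : (0 : ℝ) < i / n := by positivity
    have h4 := logCotPrimitive_sub_le hpos h1 h3
    have h5 : c - i / n ≤ 1 / n := by
      have : ((i + 1 : ℕ) : ℝ) / n = i / n + 1 / n := by push_cast; ring
      linarith
    have h6 := mul_le_mul_of_nonneg_left h5 (weighted_logCot_nonneg hpos (h1.trans h3))
    have h7 := h4.trans h6
    rw [mul_one_div, le_div_iff₀ hn0] at h7
    linarith
  induction j, hj using Nat.le_induction generalizing c with
  | base => simpa using step 1 le_rfl c hjc hcj hc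
  | succ j hj ih =>
    rw [Finset.sum_Icc_succ_top (by lia)]
    have h1 := ih (((j + 1 : ℕ) : ℝ) / n) (by gcongr; simp) le_rfl (hjc.trans hc)
    have h2 := step (j + 1) (by lia) c hjc hcj hc
    linarith

lemma prod_eq_exp_sum {n : ℕ} (hn : 1 ≤ n) :
    (∏ k ∈ Finset.Icc 1 (n / 2),
        (Real.cos (Real.pi * k / (2 * n)) / Real.sin (Real.pi * k / (2 * n))) ^
          (1 - 2 * (k : ℝ) / (n : ℝ)))
      = Real.exp (∑ k ∈ Finset.Icc 1 (n / 2), (1 - 2 * ((k : ℝ) / n)) * logCot (k / n)) := by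
  have hn0 : (0 : ℝ) < n := by exact_mod_cast hn
  rw [Real.exp_sum]
  refine Finset.prod_congr rfl fun k hk => ?_
  rw [Finset.mem_Icc] at hk
  have hk0 : (0 : ℝ) < k := by exact_mod_cast hk.1
  have hkn : (k : ℝ) / n < 1 := by
    rw [div_lt_one hn0]
    exact_mod_cast (show k < n by lia)
  obtain ⟨hc, hs⟩ := half_angle_pos (x := k / n) (by positivity) hkn
  rw [show π * k / (2 * n) = π * (k / n) / 2 by ring, Real.rpow_def_of_pos (by positivity),
    Real.log_div hc.ne' hs.ne', logCot, mul_comm, mul_div_assoc]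

lemma log_half_pi_le : Real.log (π / 2) ≤ 1 / 2 := by
  rw [Real.log_le_iff_le_exp (by positivity)]
  have := Real.quadratic_le_exp_of_nonneg (x := 1 / 2) (by norm_num)
  linarith [Real.pi_lt_d2]

lemma logPrimitive_half_le : logPrimitive (1 / 2) ≤ 1 - Real.log (π / 2) := by
  have h : Real.log (π * (1 / 2) / 2) = Real.log (π / 2) - Real.log 2 := by
    rw [← Real.log_div (by positivity) (by norm_num)]
    congr 1
    ring
  rw [logPrimitive, h]
  linarith [log_half_pi_le, Real.log_two_lt_d9]

lemma mul_logPrimitive_inv_le {n : ℕ} (hn : 1 ≤ n) :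
    n * logPrimitive (1 / n) ≤ (1 - 1 / (n : ℝ)) * Real.log n + (1 - Real.log (π / 2)) := by
  have hn0 : (0 : ℝ) < n := by exact_mod_cast hn
  have h : Real.log (π * (1 / n) / 2) = Real.log (π / 2) - Real.log n := by
    rw [← Real.log_div (by positivity) hn0.ne']
    congr 1
    ring
  have e : n * logPrimitive (1 / n) = (1 - 1 / (n : ℝ)) * Real.log n + (1 - Real.log (π / 2))
      + 1 / n * (Real.log (π / 2) - 1 / 2) := by
    rw [logPrimitive, h]
    field_simp
    ring
  rw [e]
  have : 1 / (n : ℝ) * (Real.log (π / 2) - 1 / 2) ≤ 0 :=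
    mul_nonpos_of_nonneg_of_nonpos (by positivity) (by linarith [log_half_pi_le])
  linarith

/-- With `B = 7ζ(3)/(2π²)`, for every `n ≥ 1`,
`exp(Bn - (1 - 1/n)·ln n - (1 - ln(π/2))) ≤ ∏_{1 ≤ k ≤ n/2} cot(πk/(2n))^(1 - 2k/n) ≤ exp(Bn)`. -/
theorem prod_cot_rpow_bounds (B : ℝ) (hB : B = 7 * (riemannZeta 3).re / (2 * Real.pi ^ 2))
    (n : ℕ) (hn : 1 ≤ n) :
    Real.exp (B * n - (1 - 1 / (n : ℝ)) * Real.log n - (1 - Real.log (Real.pi / 2))) ≤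
      (∏ k ∈ Finset.Icc 1 (n / 2),
        (Real.cos (Real.pi * k / (2 * n)) / Real.sin (Real.pi * k / (2 * n))) ^
          (1 - 2 * (k : ℝ) / (n : ℝ))) ∧
    (∏ k ∈ Finset.Icc 1 (n / 2),
        (Real.cos (Real.pi * k / (2 * n)) / Real.sin (Real.pi * k / (2 * n))) ^
          (1 - 2 * (k : ℝ) / (n : ℝ))) ≤ Real.exp (B * n) := by
  have hn0 : (0 : ℝ) < n := by exact_mod_cast hn
  rw [← logCotPrimitive_half] at hB
  rw [prod_eq_exp_sum hn, Real.exp_le_exp, Real.exp_le_exp]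
  have hm : ((n / 2 : ℕ) : ℝ) / n ≤ 1 / 2 := by
    rw [div_le_iff₀ hn0]
    have : ((n / 2 : ℕ) : ℝ) ≤ (n : ℝ) / 2 := Nat.cast_div_le
    linarith
  constructor
  · rcases hn.eq_or_lt with rfl | hn2
    · have h1 := logCotPrimitive_le (x := 1 / 2) (by norm_num) le_rfl
      have h2 := logPrimitive_half_le
      simp
      linarith
    · have hn2' : (2 : ℝ) ≤ n := by exact_mod_cast hn2
      have hle : (1 : ℝ) / n ≤ 1 / 2 := one_div_le_one_div_of_le (by norm_num) hn2'
      have hc : (1 : ℝ) / 2 ≤ ((n / 2 + 1 : ℕ) : ℝ) / n := by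
        rw [le_div_iff₀ hn0]
        have : (n : ℝ) ≤ 2 * ((n / 2 + 1 : ℕ) : ℝ) := by
          exact_mod_cast (show n ≤ 2 * (n / 2 + 1) by lia)
        linarith
      have h1 := logCotPrimitive_le_sum hn (n / 2) (by lia) (1 / 2) hm hc le_rfl
      have h2 := mul_le_mul_of_nonneg_left (logCotPrimitive_le (by positivity) hle) hn0.le
      have h3 := mul_logPrimitive_inv_le hn
      rw [hB]
      linarith
  · have h1 := sum_le_logCotPrimitive hn (n / 2) hm
    have h2 := le_logCotPrimitive_sub (a := ((n / 2 : ℕ) : ℝ) / n) (by positivity) hm le_rfl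
    rw [logCot_half, mul_zero, zero_mul, sub_nonneg] at h2
    have h3 := mul_le_mul_of_nonneg_left h2 hn0.le
    rw [hB]
    linarith
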